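/- Fix a principal–agent instance, η ∈ [0,1], β ∈ (0,1], a menu of randomized contracts Γ = (γ^1,…,γ^K), and functions t : C → {1,…,K} and g : C × ℝ_{≥0}^Ω → A such that (Γ,t,g) is η-incentive compatible. Then the menu Γ̃ := Linearize(Γ,β) satisfies, for every c ∈ C: U^p(Γ̃,c) ≥ ∑_{p ∈ supp(γ^{t(c)})} γ^{t(c)}_p · ∑_ω F_{g(c,p),ω}(r_ω − p_ω) − β − η/β. -/

import Mathlib

open Finset

variable {A Ω : Type} [Fintype A] [Fintype Ω] [Nonempty A] [Nonempty Ω]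

/-- Agent's expected utility `U^a(p,c,a)` of action `a` under contract `p` and costs `c`. -/
noncomputable def Uag (F : A → Ω → ℝ) (p : Ω → ℝ) (c : A → ℝ) (a : A) : ℝ :=
  (∑ ω, F a ω * p ω) - c a

/-- Principal's expected utility when the agent plays action `a` under contract `p`. -/
noncomputable def prinAct (F : A → Ω → ℝ) (r p : Ω → ℝ) (a : A) : ℝ :=
  ∑ ω, F a ω * (r ω - p ω)

/-- Principal's expected utility `U^p(p,c)`: the agent plays a best response,
with ties among best responses broken in favor of the principal. -/
noncomputable def Uprin (F : A → Ω → ℝ) (r p : Ω → ℝ) (c : A → ℝ) : ℝ :=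
  sSup { x | ∃ a : A, (∀ a' : A, Uag F p c a' ≤ Uag F p c a) ∧ x = prinAct F r p a }

/-- A deterministic contract: nonnegative payments. -/
def IsContract (p : Ω → ℝ) : Prop := ∀ ω, 0 ≤ p ω

/-- `OPT(c)`: the supremum over contracts of the principal's expected utility against `c`. -/
noncomputable def OPT (F : A → Ω → ℝ) (r : Ω → ℝ) (c : A → ℝ) : ℝ :=
  sSup { x | ∃ p : Ω → ℝ, IsContract p ∧ x = Uprin F r p c }

/-- The regret `R(p)` of a deterministic contract `p`. -/
noncomputable def regret (F : A → Ω → ℝ) (r : Ω → ℝ) (C : Set (A → ℝ)) (p : Ω → ℝ) : ℝ :=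
  sSup { x | ∃ c ∈ C, x = OPT F r c - Uprin F r p c }

/-- Uncertainty level `d(C)`: the L∞-diameter of the uncertainty set. -/
noncomputable def uncLevel (C : Set (A → ℝ)) : ℝ :=
  sSup { x | ∃ c ∈ C, ∃ c' ∈ C, x = ‖c - c'‖ }

/-- The assumptions defining a principal–agent instance `(A, Ω, r, C, F)`. -/
structure IsPAInstance (F : A → Ω → ℝ) (r : Ω → ℝ) (C : Set (A → ℝ)) : Prop where
  r_mem : ∀ ω, r ω ∈ Set.Icc (0:ℝ) 1
  F_mem : ∀ a ω, F a ω ∈ Set.Icc (0:ℝ) 1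
  F_sum : ∀ a, ∑ ω, F a ω = 1
  C_nonempty : C.Nonempty
  C_mem : ∀ c ∈ C, ∀ a, c a ∈ Set.Icc (0:ℝ) 1
  zero_action : ∃ a : A, ∀ c ∈ C, c a = 0

/-- A randomized contract: a finitely supported probability distribution over
deterministic contracts, represented as a finite tuple of contracts with probabilities. -/
structure RandCon (Ω : Type) where
  n : ℕ
  ps : Fin n → Ω → ℝ
  q : Fin n → ℝ
  q_nonneg : ∀ i, 0 ≤ q i
  q_sum : ∑ i, q i = 1

/-- All the contracts in the support are genuine (nonnegative) contracts. -/
def RandCon.valid {Ω : Type} (γ : RandCon Ω) : Prop := ∀ i ω, 0 ≤ γ.ps i ω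

/-- Agent's expected utility `U^a(γ,c)` of a randomized contract. -/
noncomputable def UagRand (F : A → Ω → ℝ) (γ : RandCon Ω) (c : A → ℝ) : ℝ :=
  ∑ i, γ.q i * (⨆ a : A, Uag F (γ.ps i) c a)

/-- Principal's expected utility `U^p(γ,c)` of a randomized contract. -/
noncomputable def UprinRand (F : A → Ω → ℝ) (r : Ω → ℝ) (γ : RandCon Ω) (c : A → ℝ) : ℝ :=
  ∑ i, γ.q i * Uprin F r (γ.ps i) c

/-- The regret `R(γ)` of a randomized contract. -/
noncomputable def regretRand (F : A → Ω → ℝ) (r : Ω → ℝ) (C : Set (A → ℝ))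
    (γ : RandCon Ω) : ℝ :=
  sSup { x | ∃ c ∈ C, x = OPT F r c - UprinRand F r γ c }

/-- Principal's expected utility `U^p(Γ,c)` under a menu of randomized contracts:
the agent selects an element maximizing its own expected utility, breaking ties in
favor of the principal. -/
noncomputable def UprinRMenu (F : A → Ω → ℝ) (r : Ω → ℝ) {K : ℕ} (Γ : Fin K → RandCon Ω)
    (c : A → ℝ) : ℝ :=
  sSup { x | ∃ i : Fin K, (∀ j : Fin K, UagRand F (Γ j) c ≤ UagRand F (Γ i) c) ∧
    x = UprinRand F r (Γ i) c }

/-- The regret `R(Γ)` of a menu of randomized contracts. -/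
noncomputable def regretRMenu (F : A → Ω → ℝ) (r : Ω → ℝ) (C : Set (A → ℝ)) {K : ℕ}
    (Γ : Fin K → RandCon Ω) : ℝ :=
  sSup { x | ∃ c ∈ C, x = OPT F r c - UprinRMenu F r Γ c }

/-- `Cε` is an `ε`-cover of the uncertainty set `C` (w.r.t. the L∞ norm). -/
def IsCover (C Cε : Set (A → ℝ)) (ε : ℝ) : Prop :=
  Cε ⊆ C ∧ ∀ c ∈ C, ∃ c' ∈ Cε, ‖c - c'‖ ≤ ε

/-- The triplet `(Γ, t, g)` is `η`-incentive compatible: for every `c ∈ C`, following the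
recommendation `t` (selection from the menu) and `g` (action played given the realized
deterministic contract) loses the agent at most `η` w.r.t. any element of the menu. -/
def EtaIC (F : A → Ω → ℝ) (C : Set (A → ℝ)) {K : ℕ} (Γ : Fin K → RandCon Ω)
    (t : (A → ℝ) → Fin K) (g : (A → ℝ) → (Ω → ℝ) → A) (η : ℝ) : Prop :=
  ∀ c ∈ C, ∀ i : Fin K,
    (∑ j, (Γ (t c)).q j *
      ((∑ ω, F (g c ((Γ (t c)).ps j)) ω * (Γ (t c)).ps j ω) - c (g c ((Γ (t c)).ps j))))
      ≥ UagRand F (Γ i) c - η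

/-- `Linearize`: replace every deterministic contract `p` in the support of a randomized
contract with `p + β (r − p)`, keeping the same probabilities. -/
def RandCon.linearize {Ω : Type} (γ : RandCon Ω) (β : ℝ) (r : Ω → ℝ) : RandCon Ω where
  n := γ.n
  ps := fun i ω => γ.ps i ω + β * (r ω - γ.ps i ω)
  q := γ.q
  q_nonneg := γ.q_nonneg
  q_sum := γ.q_sum

theorem aux_prin_ge (F : A → Ω → ℝ) (r p : Ω → ℝ) (c : A → ℝ) (a : A)
    (ha : ∀ a' : A, Uag F p c a' ≤ Uag F p c a) : prinAct F r p a ≤ Uprin F r p c := by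
  refine le_csSup ?_ ⟨a, ha, rfl⟩
  refine ((Set.finite_range (prinAct F r p)).subset ?_).bddAbove
  rintro x ⟨a, -, rfl⟩
  exact ⟨a, rfl⟩

theorem aux_menu_ge (F : A → Ω → ℝ) (r : Ω → ℝ) {K : ℕ} (Γ : Fin K → RandCon Ω)
    (c : A → ℝ) (i : Fin K) (hi : ∀ j : Fin K, UagRand F (Γ j) c ≤ UagRand F (Γ i) c) :
    UprinRand F r (Γ i) c ≤ UprinRMenu F r Γ c := by
  refine le_csSup ?_ ⟨i, hi, rfl⟩
  refine ((Set.finite_range (fun i => UprinRand F r (Γ i) c)).subset ?_).bddAbove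
  rintro x ⟨a, -, rfl⟩
  exact ⟨a, rfl⟩

theorem aux_le_sup (F : A → Ω → ℝ) (p : Ω → ℝ) (c : A → ℝ) (a : A) :
    Uag F p c a ≤ ⨆ a, Uag F p c a :=
  le_ciSup (Set.finite_range _).bddAbove a

theorem aux_lin_ag (F : A → Ω → ℝ) (r p : Ω → ℝ) (β : ℝ) (c : A → ℝ) (a : A) :
    Uag F (fun ω => p ω + β * (r ω - p ω)) c a = Uag F p c a + β * prinAct F r p a := by
  unfold Uag prinAct
  rw [Finset.mul_sum, sub_add_eq_add_sub, ← Finset.sum_add_distrib]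
  congr 1
  exact Finset.sum_congr rfl fun ω _ => by ring

theorem aux_lin_pr (F : A → Ω → ℝ) (r p : Ω → ℝ) (β : ℝ) (a : A) :
    prinAct F r (fun ω => p ω + β * (r ω - p ω)) a = (1 - β) * prinAct F r p a := by
  unfold prinAct
  rw [Finset.mul_sum]
  exact Finset.sum_congr rfl fun ω _ => by ring

theorem aux_pr_le (F : A → Ω → ℝ) (r p : Ω → ℝ) (C : Set (A → ℝ))
    (h : IsPAInstance F r C) (hp : ∀ ω, 0 ≤ p ω) (a : A) : prinAct F r p a ≤ 1 := by
  rw [← h.F_sum a]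
  refine Finset.sum_le_sum fun ω _ => ?_
  have h1 := (h.F_mem a ω).1
  have h2 := (h.r_mem ω).2
  have h3 := hp ω
  nlinarith

/-- If `(Γ,t,g)` is `η`-incentive compatible, then the linearized menu
`Γ̃ = Linearize(Γ,β)` guarantees the principal, against every `c ∈ C`, at least the
utility obtained under the behavior prescribed by `t, g`, minus `β + η/β`. -/
theorem linearize_menu_guarantee
    {A Ω : Type} [Fintype A] [Fintype Ω] [Nonempty A] [Nonempty Ω]
    (F : A → Ω → ℝ) (r : Ω → ℝ) (C : Set (A → ℝ))
    (hInst : IsPAInstance F r C)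
    (η : ℝ) (hη : η ∈ Set.Icc (0:ℝ) 1)
    (β : ℝ) (hβ : β ∈ Set.Ioc (0:ℝ) 1)
    (K : ℕ) (hK : 0 < K)
    (Γ : Fin K → RandCon Ω) (hΓ : ∀ i, (Γ i).valid)
    (t : (A → ℝ) → Fin K) (g : (A → ℝ) → (Ω → ℝ) → A)
    (hIC : EtaIC F C Γ t g η) :
    ∀ c ∈ C,
      UprinRMenu F r (fun i => (Γ i).linearize β r) c ≥
        (∑ j, (Γ (t c)).q j *
          ∑ ω, F (g c ((Γ (t c)).ps j)) ω * (r ω - (Γ (t c)).ps j ω)) - β - η / β := by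
  intro c hc
  obtain ⟨hβ0, hβ1⟩ := hβ
  haveI : Nonempty (Fin K) := ⟨⟨0, hK⟩⟩
  obtain ⟨i, hi⟩ := Finite.exists_max (fun i => UagRand F ((Γ i).linearize β r) c)
  have hmenu := aux_menu_ge F r (fun i => (Γ i).linearize β r) c i hi
  have hbr : ∀ j : Fin (Γ i).n, ∃ a : A, ∀ a',
      Uag F (fun ω => (Γ i).ps j ω + β * (r ω - (Γ i).ps j ω)) c a' ≤
      Uag F (fun ω => (Γ i).ps j ω + β * (r ω - (Γ i).ps j ω)) c a :=
    fun j => Finite.exists_max _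
  choose a ha using hbr
  set Y := ∑ j, (Γ i).q j * prinAct F r ((Γ i).ps j) (a j) with hY
  set X := ∑ j, (Γ (t c)).q j * prinAct F r ((Γ (t c)).ps j) (g c ((Γ (t c)).ps j)) with hX
  set V := ∑ j, (Γ i).q j * Uag F ((Γ i).ps j) c (a j) with hV
  set W := ∑ j, (Γ (t c)).q j * Uag F ((Γ (t c)).ps j) c (g c ((Γ (t c)).ps j)) with hW
  have e1 : W ≥ UagRand F (Γ i) c - η := hIC c hc i
  have e2 : V ≤ UagRand F (Γ i) c :=
    Finset.sum_le_sum fun j _ =>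
      mul_le_mul_of_nonneg_left (aux_le_sup F _ c _) ((Γ i).q_nonneg j)
  have e3 : W + β * X ≤ UagRand F ((Γ (t c)).linearize β r) c := by
    rw [hW, hX, Finset.mul_sum, ← Finset.sum_add_distrib]
    refine Finset.sum_le_sum fun j _ => ?_
    have h := aux_le_sup F (((Γ (t c)).linearize β r).ps j) c (g c ((Γ (t c)).ps j))
    have h2 := aux_lin_ag F r ((Γ (t c)).ps j) β c (g c ((Γ (t c)).ps j))
    have h3 := mul_le_mul_of_nonneg_left (h2.symm.le.trans h) ((Γ (t c)).q_nonneg j)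
    refine le_trans (le_of_eq ?_) h3
    ring
  have e4 : UagRand F ((Γ i).linearize β r) c ≤ V + β * Y := by
    rw [hV, hY, Finset.mul_sum, ← Finset.sum_add_distrib]
    refine Finset.sum_le_sum fun j _ => ?_
    have h3 := mul_le_mul_of_nonneg_left
      ((ciSup_le (ha j)).trans (aux_lin_ag F r ((Γ i).ps j) β c (a j)).le) ((Γ i).q_nonneg j)
    refine le_trans h3 (le_of_eq ?_)
    ring
  have e5 : (1 - β) * Y ≤ UprinRand F r ((Γ i).linearize β r) c := by
    rw [hY, Finset.mul_sum]
    refine Finset.sum_le_sum fun j _ => ?_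
    have h3 := mul_le_mul_of_nonneg_left
      ((aux_lin_pr F r ((Γ i).ps j) β (a j)).symm.le.trans
        (aux_prin_ge F r _ c (a j) (ha j))) ((Γ i).q_nonneg j)
    refine le_trans (le_of_eq ?_) h3
    ring
  have e6 : Y ≤ 1 := by
    rw [← (Γ i).q_sum]
    refine Finset.sum_le_sum fun j _ => ?_
    exact mul_le_of_le_one_right ((Γ i).q_nonneg j) (aux_pr_le F r _ C hInst (hΓ i j) _)
  have e7 := hi (t c)
  have e8 : X - Y ≤ η / β := by
    rw [le_div_iff₀ hβ0]
    linarith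
  have e9 : β * Y ≤ β := by nlinarith
  change UprinRMenu F r (fun i => (Γ i).linearize β r) c ≥ X - β - η / β
  linarith
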